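/- Let k be an algebraically closed field, let A be a finitely generated commutative k-algebra which is an integral domain, let L be a field extension of k, and set B := A ⊗_k L. Assume B is an integral domain. Suppose n ⊆ B is a maximal ideal with n = n² (i.e. n/n² = 0) and the contraction m := {a ∈ A : a ⊗ 1 ∈ n} is a maximal ideal of A. Then the structure map k → A is bijective, i.e. A = k. -/

import Mathlib

/-!
The ring `A ⊗[k] L` is Noetherian, being a finitely generated algebra over the field `L`.
Hence the idempotent ideal `n` is finitely generated, and in a domain a finitely generated
idempotent ideal is `0` or the whole ring; since `n` is proper, `n = 0`. As `k → L` is injective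
and `A` is flat over `k`, the map `A → A ⊗[k] L` is injective, so `m = 0` and `A` is a field.
By Zariski's lemma `A` is finite over `k`, hence equal to `k` because `k` is algebraically closed.
-/

open TensorProduct

/-- Let `k` be an algebraically closed field, `A` a finitely generated commutative
`k`-algebra which is a domain, `L/k` a field extension, and `B := A ⊗[k] L` a domain.
If `n ⊆ B` is a maximal ideal with `n = n²` whose contraction
`m = {a ∈ A : a ⊗ 1 ∈ n}` is a maximal ideal of `A`, then `A = k`. -/
theorem eq_base_field_of_isolated_point
    {k : Type*} [Field k] [IsAlgClosed k]
    {A : Type*} [CommRing A] [IsDomain A] [Algebra k A] [Algebra.FiniteType k A]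
    {L : Type*} [Field L] [Algebra k L]
    [IsDomain (A ⊗[k] L)]
    (n : Ideal (A ⊗[k] L)) (hn : n.IsMaximal) (hn2 : n = n ^ 2)
    (m : Ideal A) (hm : m = n.comap (algebraMap A (A ⊗[k] L)))
    (hmmax : m.IsMaximal) :
    Function.Bijective (algebraMap k A) := by
  have hNoeth : IsNoetherianRing (A ⊗[k] L) := by
    have : IsNoetherianRing (L ⊗[k] A) := Algebra.FiniteType.isNoetherianRing L _
    exact isNoetherianRing_of_ringEquiv (L ⊗[k] A) (Algebra.TensorProduct.comm k L A).toRingEquiv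
  have hn0 : n = ⊥ := by
    have hidem : IsIdempotentElem n := by
      rw [IsIdempotentElem, ← pow_two, ← hn2]
    exact ((Ideal.isIdempotentElem_iff_eq_bot_or_top n (IsNoetherian.noetherian n)).1
      hidem).resolve_right hn.ne_top
  have hinj : Function.Injective (algebraMap A (A ⊗[k] L)) :=
    Algebra.TensorProduct.includeLeft_injective (S := A) (algebraMap k L).injective
  have hm0 : m = ⊥ := by
    rw [hm, hn0]
    exact Ideal.comap_bot_of_injective _ hinj
  have hA : IsField A := by
    rw [Ring.isField_iff_maximal_bot, ← hm0]
    exact hmmax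
  let : Field A := hA.toField
  have : Module.Finite k A := finite_of_finite_type_of_isJacobsonRing k A
  exact IsAlgClosed.algebraMap_bijective_of_isIntegral
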